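/- (Main theorem.) Let p be an odd prime and let (G, H, T) be a faithful RCC loop folder of order 2p with ⟨T⟩ = G (the envelope of an RCC loop of order 2p). Then there is a subgroup K of G with H ≤ K and |G : K| = 2 such that one of the following three mutually exclusive cases occurs: (a) G is isomorphic to the wreath product C_p ≀ C_2; (b) there is an injective group homomorphism from G into the affine group Aff(1, p); (c) there is an element a ∈ G of order 2 such that G is the internal direct product of K and ⟨a⟩ (both normal, trivial intersection, K⟨a⟩ = G), K has odd order, and there is an injective group homomorphism from K into Aff(1, p). Moreover, in cases (b) and (c) the subgroup ⟨T ∩ K⟩ is a normal subgroup of G of order p. -/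

import Mathlib

/-- A loop folder `(G, H, T)`: `T` contains `1` and is a transversal for the right cosets
of every conjugate `H^g = g⁻¹Hg` of `H` in `G` (note `H^g x = H^g t ↔ g*(x*t⁻¹)*g⁻¹ ∈ H`). -/
def IsLoopFolder {G : Type*} [Group G] (H : Subgroup G) (T : Set G) : Prop :=
  (1 : G) ∈ T ∧ ∀ g x : G, ∃! t, t ∈ T ∧ g * (x * t⁻¹) * g⁻¹ ∈ H

/-- The loop folder is right conjugacy closed: `T` is invariant under conjugation by `G`. -/
def IsRCC {G : Type*} [Group G] (T : Set G) : Prop :=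
  ∀ t ∈ T, ∀ g : G, g⁻¹ * t * g ∈ T

/-- The loop folder is faithful: the core `⋂_{g ∈ G} g⁻¹Hg` of `H` in `G` is trivial. -/
def IsFaithfulFolder {G : Type*} [Group G] (H : Subgroup G) : Prop :=
  ∀ x : G, (∀ g : G, g * x * g⁻¹ ∈ H) → x = 1

/-- The base group `C_p × C_p` of the wreath product, written multiplicatively. -/
abbrev CpCp (p : ℕ) := Multiplicative (ZMod p) × Multiplicative (ZMod p)

/-- The factor-swapping automorphism of `C_p × C_p`. -/
def swapAut (p : ℕ) : MulAut (CpCp p) := (MulEquiv.prodComm : CpCp p ≃* CpCp p)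

/-- The action of `C_2` on `C_p × C_p` in which the nontrivial element swaps the factors. -/
def wreathAction (p : ℕ) : Multiplicative (ZMod 2) →* MulAut (CpCp p) where
  toFun x := if Multiplicative.toAdd x = 0 then 1 else swapAut p
  map_one' := by simp
  map_mul' a b := by
    have h2 : ∀ x : ZMod 2, x = 0 ∨ x = 1 := by decide
    have hswap : swapAut p * swapAut p = 1 := by
      ext x : 1
      simp [swapAut]
    have h11 : (1 : ZMod 2) + 1 = 0 := by decide
    have h10 : (1 : ZMod 2) ≠ 0 := by decide
    rcases h2 (Multiplicative.toAdd a) with ha | ha <;>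
      rcases h2 (Multiplicative.toAdd b) with hb | hb <;>
      simp [toAdd_mul, ha, hb, h11, h10, hswap]

/-- The wreath product `C_p ≀ C_2 = (C_p × C_p) ⋊ C_2`, where the nontrivial element of
`C_2` swaps the two factors. -/
abbrev WreathCpC2 (p : ℕ) := SemidirectProduct (CpCp p) (Multiplicative (ZMod 2)) (wreathAction p)

/-- The affine group `Aff(1, p)` of invertible affine transformations `x ↦ ax + b` of the
line over `ℤ/pℤ`. -/
abbrev Aff1 (p : ℕ) := ZMod p ≃ᵃ[ZMod p] ZMod p


/-!
Let `P` be a Sylow `p`-subgroup of `G` and `C` its centralizer. By the congruence for the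
conjugation action of `P` on `T`, either `T ⊆ C`, and then `P` is central because `T` generates `G`,
or `T ∩ C` and `T \ C` both have `p` elements. In the second case `T \ C` is a single orbit of `P`,
and for `r ∈ T \ C` the subgroup `C_P(r)` is central of index `p` in `P`. By faithfulness a central
`p`-subgroup meets `H` trivially and so has order at most `p`; hence `|P|` is `p` or `p ^ 2`.

If `|P| = p ^ 2` and `Z` is a central subgroup of order `p`, then `H` has order `p` and an
involution outside `H ⊔ Z` exhibits `G` as the wreath product.

If `|P| = p`, then `P` has two regular orbits on `G ⧸ H`, whence `C ⊓ H = ⊥` and `|C| ≤ 2 * p`.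
Were `P` not normal, `T` would consist of involutions, `1` and a single conjugacy class, and
`N_G(P) = C`; the transfer `G → P` would kill `H` and the involutions, so its image would have at
most two elements. Hence `P` is normal and `T ∩ (H ⊔ P) = P`. If `C = P`, then `G` acts faithfully
on the affine line `P`; otherwise `C` contains a central involution outside `K = H ⊔ P`, and `K`
acts faithfully on that line.
-/

section Transversals

variable {G : Type*} [Group G] {H : Subgroup G} {T : Set G}

theorem IsLoopFolder.isComplement (h : IsLoopFolder H T) :
    Subgroup.IsComplement (H : Set G) T := by
  refine Subgroup.isComplement_iff_existsUnique_mul_inv_mem.2 fun x ↦ ?_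
  obtain ⟨t, ⟨ht, htH⟩, huniq⟩ := h.2 1 x
  simp only [one_mul, inv_one, mul_one] at htH huniq
  exact ⟨⟨t, ht⟩, htH, fun s hs ↦ Subtype.ext (huniq s ⟨s.2, hs⟩)⟩

theorem IsLoopFolder.ncard_eq_index (h : IsLoopFolder H T) : T.ncard = H.index :=
  h.isComplement.ncard_right

theorem IsLoopFolder.ncard_inter_eq_relIndex (h : IsLoopFolder H T) {K : Subgroup G}
    (hHK : H ≤ K) : (T ∩ K).ncard = H.relIndex K := by
  have hK : Subgroup.IsComplement (H.subgroupOf K : Set K) ((↑) ⁻¹' T) := by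
    rw [Subgroup.isComplement_iff_existsUnique_mul_inv_mem]
    intro k
    obtain ⟨t, ht, huniq⟩ := Subgroup.isComplement_iff_existsUnique_mul_inv_mem.1 h.isComplement k
    have htK : (t : G) ∈ K := by simpa using K.mul_mem (K.inv_mem (hHK ht)) k.2
    refine ⟨⟨⟨t, htK⟩, t.2⟩, ht, fun s hs ↦ ?_⟩
    have hst : ((s : K) : G) = t := congrArg Subtype.val (huniq ⟨s, s.2⟩ hs)
    exact Subtype.ext (Subtype.ext hst)
  rw [Subgroup.relIndex, ← hK.ncard_right, Set.inter_comm,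
    ← Set.ncard_image_of_injective _ Subtype.val_injective]
  exact congrArg Set.ncard (Subtype.image_preimage_coe (K : Set G) T).symm

theorem IsRCC.conj_mem (hT : IsRCC T) (g : G) {t : G} (ht : t ∈ T) : g * t * g⁻¹ ∈ T := by
  simpa using hT t ht g⁻¹

theorem IsFaithfulFolder.disjoint_center (hH : IsFaithfulFolder H) :
    Disjoint (Subgroup.center G) H :=
  Subgroup.disjoint_def.2 fun hz hzH ↦
    hH _ fun g ↦ by rwa [Subgroup.mem_center_iff.1 hz g, mul_inv_cancel_right]

theorem card_mul_relIndex {K : Subgroup G} (hHK : H ≤ K) :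
    Nat.card H * H.relIndex K = Nat.card K := by
  simpa using (⊥ : Subgroup G).relIndex_mul_relIndex H K bot_le hHK

theorem relIndex_sup_of_disjoint [Finite H] {N : Subgroup G} [N.Normal] (hHN : Disjoint H N) :
    H.relIndex (H ⊔ N) = Nat.card N := by
  refine Nat.eq_of_mul_eq_mul_left (Nat.card_pos (α := H)) ?_
  calc Nat.card H * H.relIndex (H ⊔ N)
      = Nat.card (H ⊔ N : Subgroup G) := card_mul_relIndex le_sup_left
    _ = Nat.card N * N.relIndex (H ⊔ N) := (card_mul_relIndex le_sup_right).symm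
    _ = Nat.card H * Nat.card N := by
        rw [Subgroup.relIndex_sup_right, ← Subgroup.inf_relIndex_right, hHN.symm.eq_bot,
          Subgroup.relIndex_bot_left, mul_comm]

theorem index_sup_mul_card [Finite H] {N : Subgroup G} [N.Normal] (hHN : Disjoint H N) :
    (H ⊔ N).index * Nat.card N = H.index := by
  rw [← relIndex_sup_of_disjoint hHN, mul_comm, Subgroup.relIndex_mul_index le_sup_left]

theorem index_sup_eq_two [Finite H] {N : Subgroup G} [Finite N] [N.Normal] (hHN : Disjoint H N)
    (hidx : H.index = 2 * Nat.card N) : (H ⊔ N).index = 2 :=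
  Nat.eq_of_mul_eq_mul_right Nat.card_pos ((index_sup_mul_card hHN).trans hidx)

end Transversals

section Conjugation

variable {G : Type*} [Group G] {p : ℕ} {P : Subgroup G} {A : Set G}

/-- The orbit of `a` under conjugation by the elements of the subgroup `P`. -/
def conjOrbit (P : Subgroup G) (a : G) : Set G := (fun x ↦ x * a * x⁻¹) '' P

theorem ncard_conjOrbit (P : Subgroup G) (a : G) :
    (conjOrbit P a).ncard = (Subgroup.centralizer {a}).relIndex P := by
  let := MulAction.compHom G (MulAut.conj.comp P.subtype)
  have horbit : conjOrbit P a = MulAction.orbit P a := by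
    ext b
    simp only [conjOrbit, Set.mem_image, MulAction.mem_orbit_iff, Subtype.exists]
    exact exists_congr fun x ↦ exists_prop.symm
  have hstab : (Subgroup.centralizer {a}).subgroupOf P = MulAction.stabilizer P a := by
    ext x
    rw [Subgroup.mem_subgroupOf, Subgroup.mem_centralizer_singleton_iff,
      MulAction.mem_stabilizer_iff]
    exact mul_inv_eq_iff_eq_mul.symm
  rw [horbit, Subgroup.relIndex, hstab, MulAction.index_stabilizer]

theorem ncard_modEq_ncard_inter_centralizer [Fact p.Prime] [Finite G] (hP : IsPGroup p P)
    (hA : ∀ x ∈ P, ∀ a ∈ A, x * a * x⁻¹ ∈ A) :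
    A.ncard ≡ (A ∩ Subgroup.centralizer (P : Set G)).ncard [MOD p] := by
  let := MulAction.compHom G (MulAut.conj.comp P.subtype)
  let S : SubMulAction P G := ⟨A, fun x a ha ↦ hA x x.2 a ha⟩
  have hfixed : A ∩ Subgroup.centralizer (P : Set G) =
      (↑) '' MulAction.fixedPoints P S := by
    ext a
    simp only [Set.mem_inter_iff, SetLike.mem_coe, Subgroup.mem_centralizer_iff, Set.mem_image,
      MulAction.mem_fixedPoints]
    constructor
    · rintro ⟨ha, hcomm⟩
      exact ⟨⟨a, ha⟩, fun x ↦ Subtype.ext (mul_inv_eq_iff_eq_mul.2 (hcomm x x.2)), rfl⟩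
    · rintro ⟨s, hs, rfl⟩
      exact ⟨s.2, fun x hx ↦ mul_inv_eq_iff_eq_mul.1 (congrArg Subtype.val (hs ⟨x, hx⟩))⟩
  rw [hfixed, Set.ncard_image_of_injective _ Subtype.val_injective]
  exact hP.card_modEq_card_fixedPoints S

theorem dvd_ncard_conjOrbit [Fact p.Prime] [Finite G] (hP : IsPGroup p P) {a : G}
    (ha : a ∉ Subgroup.centralizer (P : Set G)) : p ∣ (conjOrbit P a).ncard := by
  rw [ncard_conjOrbit]
  obtain ⟨n, hn⟩ := hP.index ((Subgroup.centralizer {a}).subgroupOf P)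
  rw [Subgroup.relIndex, hn]
  refine dvd_pow_self p fun h0 ↦ ha ?_
  rw [h0, pow_zero, ← Subgroup.relIndex, Subgroup.relIndex_eq_one] at hn
  exact fun x hx ↦ (Subgroup.mem_centralizer_singleton_iff.1 (hn hx))

theorem conjOrbit_eq_of_ncard_le [Fact p.Prime] [Finite G] (hP : IsPGroup p P)
    (hA : ∀ x ∈ P, ∀ a ∈ A, x * a * x⁻¹ ∈ A)
    (hcard : (A \ Subgroup.centralizer (P : Set G)).ncard ≤ p) {a : G}
    (ha : a ∈ A \ Subgroup.centralizer (P : Set G)) :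
    conjOrbit P a = A \ Subgroup.centralizer (P : Set G) := by
  have hsub : conjOrbit P a ⊆ A \ Subgroup.centralizer (P : Set G) := by
    rintro _ ⟨x, hx, rfl⟩
    refine ⟨hA x hx a ha.1, fun hcomm ↦ ha.2 ?_⟩
    have : x * (x * a * x⁻¹) = x * a * x⁻¹ * x := hcomm x hx
    have hxa : x * a * x⁻¹ = a := by simpa [mul_assoc] using this
    rwa [← hxa]
  have hpos : 0 < (conjOrbit P a).ncard :=
    (Set.ncard_pos (Set.toFinite _)).2 ⟨_, 1, P.one_mem, rfl⟩
  exact Set.eq_of_subset_of_ncard_le hsub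
    (hcard.trans (Nat.le_of_dvd hpos (dvd_ncard_conjOrbit hP ha.2)))

end Conjugation

section SemidirectProduct

variable {N Q M : Type*} [Group N] [Group Q] [Group M] {φ : Q →* MulAut N}

theorem semidirectProduct_lift_injective {f : N →* M} {g : Q →* M}
    (h : ∀ q : Q, f.comp (φ q).toMonoidHom = (MulAut.conj (g q)).toMonoidHom.comp f)
    (hf : Function.Injective f) (hg : Function.Injective g) (hfg : Disjoint f.range g.range) :
    Function.Injective (SemidirectProduct.lift f g h) := by
  rw [injective_iff_map_eq_one]
  intro x hx
  have hx' : f x.left = g x.right⁻¹ := by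
    rw [map_inv]
    exact eq_inv_of_mul_eq_one_left hx
  have hleft : f x.left = 1 := Subgroup.disjoint_def.1 hfg ⟨_, rfl⟩ ⟨_, hx'.symm⟩
  have hright : g x.right⁻¹ = 1 := hx'.symm.trans hleft
  exact SemidirectProduct.ext ((map_eq_one_iff f hf).1 hleft)
    (inv_eq_one.1 ((map_eq_one_iff g hg).1 hright))

theorem exists_injective_of_isComplement' {G : Type*} [Group G] {P Q : Subgroup G} [P.Normal]
    (hPQ : P.IsComplement' Q) {f : P →* M} {g : Q →* M} (hf : Function.Injective f)
    (hg : Function.Injective g) (hfg : Disjoint f.range g.range)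
    (hconj : ∀ (q : Q) (x : P), f (MulAut.conjNormal (q : G) x) * g q = g q * f x) :
    ∃ F : G →* M, Function.Injective F := by
  have hQ : Q ≤ Subgroup.normalizer P := P.normalizer_eq_top ▸ le_top
  let e := SemidirectProduct.mulEquivSubgroup hPQ
  let F := SemidirectProduct.lift f g (φ := P.normalizerMonoidHom.comp (Subgroup.inclusion hQ))
    fun q ↦ MonoidHom.ext fun x ↦ eq_mul_inv_of_mul_eq (hconj q x)
  have hF : Function.Injective F := semidirectProduct_lift_injective _ hf hg hfg
  exact ⟨F.comp e.symm.toMonoidHom, hF.comp e.symm.injective⟩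

end SemidirectProduct

section Affine

variable {p : ℕ}

/-- The linear part of an affine transformation `x ↦ ax + b` of the line over `ℤ/pℤ`, recorded
as the unit `a`. -/
noncomputable def affineSlope : Aff1 p →* (ZMod p)ˣ := LinearEquiv.det.comp AffineEquiv.linearHom

theorem aff1_apply_eq [Fact p.Prime] (f : Aff1 p) (x : ZMod p) : f x = affineSlope f * x + f 0 := by
  have hslope : (affineSlope f : ZMod p) = f.linear 1 :=
    (LinearEquiv.coe_det f.linear).trans (LinearMap.det_ring _)
  have hlin : f.linear x = f.linear 1 * x := by
    simpa [mul_comm] using f.linear.map_smul x 1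
  have hdecomp : f x = f.linear x + f 0 := by simpa using f.map_vadd 0 x
  rw [hdecomp, hlin, hslope]

theorem affineSlope_eq_one_of_pow_eq_one [Fact p.Prime] {f : Aff1 p} (hf : f ^ p = 1) :
    affineSlope f = 1 := by
  have hpow : affineSlope f ^ p = 1 := by rw [← map_pow, hf, map_one]
  exact Units.ext (by simpa using congrArg Units.val hpow)

theorem affineSlope_prodMk_apply_zero_injective [Fact p.Prime] :
    Function.Injective fun f : Aff1 p ↦ (affineSlope f, f 0) := by
  intro f g hfg
  ext x
  rw [aff1_apply_eq f, aff1_apply_eq g, (Prod.mk.inj hfg).1, (Prod.mk.inj hfg).2]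

theorem card_lt_sq_of_injective_aff1 [hp : Fact p.Prime] {α : Type*} {F : α → Aff1 p}
    (hF : Function.Injective F) : Nat.card α < p ^ 2 := by
  calc Nat.card α ≤ Nat.card ((ZMod p)ˣ × ZMod p) :=
        Nat.card_le_card_of_injective _ (affineSlope_prodMk_apply_zero_injective.comp hF)
    _ = (p - 1) * p := by
      rw [Nat.card_prod, Nat.card_eq_fintype_card, ZMod.card_units, Nat.card_zmod]
    _ < p ^ 2 := by
      rw [sq]
      exact Nat.mul_lt_mul_of_pos_right (Nat.sub_lt hp.out.pos one_pos) hp.out.pos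

theorem eq_one_of_commute_of_sq_eq_one [hp : Fact p.Prime] (hodd : Odd p) {f a : Aff1 p}
    (hf : f ^ p = 1) (hf1 : f ≠ 1) (ha : a ^ 2 = 1) (hcomm : Commute f a) : a = 1 := by
  have hfx : ∀ x, f x = x + f 0 := fun x ↦ by
    rw [aff1_apply_eq, affineSlope_eq_one_of_pow_eq_one hf, Units.val_one, one_mul]
  have hf0 : f 0 ≠ 0 := fun h0 ↦ hf1 (AffineEquiv.ext fun x ↦ by rw [hfx, h0, add_zero]; rfl)
  have hslope : (affineSlope a : ZMod p) = 1 := by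
    have h0 : f (a 0) = a (f 0) := congrArg (fun g : Aff1 p ↦ g 0) hcomm.eq
    rw [hfx, aff1_apply_eq a (f 0), add_comm, add_left_inj] at h0
    exact (mul_eq_right₀ hf0).1 h0.symm
  have hax : ∀ x, a x = x + a 0 := fun x ↦ by rw [aff1_apply_eq, hslope, one_mul]
  have ha0 : a 0 = 0 := by
    have h0 : a (a 0) = 0 := congrArg (fun g : Aff1 p ↦ g 0) ((sq a).symm.trans ha)
    rw [hax] at h0
    exact (ZMod.add_self_eq_zero_iff_eq_zero hodd).1 h0
  exact AffineEquiv.ext fun x ↦ by rw [hax, ha0, add_zero]; rfl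

/-- An automorphism of the cyclic group of order `p`, viewed as an invertible linear map of the
line over `ℤ/pℤ`. -/
def linearOfMulAut : MulAut (Multiplicative (ZMod p)) →* Aff1 p where
  toFun φ := (AddEquiv.toLinearEquiv (AddEquiv.toMultiplicative.symm φ)
    fun c x ↦ ZMod.map_smul _ c x).toAffineEquiv
  map_one' := rfl
  map_mul' _ _ := rfl

theorem linearOfMulAut_injective : Function.Injective (linearOfMulAut (p := p)) :=
  fun _ _ h ↦ MulEquiv.ext fun x ↦ congrArg (fun f : Aff1 p ↦ f x.toAdd) h

theorem linearOfMulAut_mul_constVAddHom (φ : MulAut (Multiplicative (ZMod p)))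
    (x : Multiplicative (ZMod p)) :
    AffineEquiv.constVAddHom (ZMod p) (ZMod p) (φ x) * linearOfMulAut φ =
      linearOfMulAut φ * AffineEquiv.constVAddHom (ZMod p) (ZMod p) x :=
  AffineEquiv.ext fun y ↦ (map_mul φ x (Multiplicative.ofAdd y)).symm

theorem conjNormal_comp_subtype_injective {G : Type*} [Group G] {P Q : Subgroup G} [P.Normal]
    (hPQ : Disjoint P Q) (hC : Subgroup.centralizer (P : Set G) ≤ P) :
    Function.Injective ((MulAut.conjNormal (H := P)).comp Q.subtype) := by
  rw [injective_iff_map_eq_one]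
  intro q hq
  have hqC : (q : G) ∈ Subgroup.centralizer (P : Set G) := fun x hx ↦ by
    have : (q : G) * x * (q : G)⁻¹ = x := by
      simpa using congrArg (fun σ : MulAut P ↦ (σ ⟨x, hx⟩ : G)) hq
    exact (mul_inv_eq_iff_eq_mul.1 this).symm
  exact Subtype.ext (Subgroup.disjoint_def.1 hPQ (hC hqC) q.2)

theorem exists_injective_aff1 [Fact p.Prime] {G : Type*} [Group G] {P : Subgroup G}
    [P.Normal] (hP : Nat.card P = p) (hcop : p.Coprime P.index)
    (hC : Subgroup.centralizer (P : Set G) ≤ P) :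
    ∃ F : G →* Aff1 p, Function.Injective F := by
  obtain ⟨Q, hQ⟩ := Subgroup.exists_right_complement'_of_coprime (hP.symm ▸ hcop)
  let e : P ≃* Multiplicative (ZMod p) := mulEquivOfPrimeCardEq hP (Nat.card_zmod p)
  let f : P →* Aff1 p := (AffineEquiv.constVAddHom (ZMod p) (ZMod p)).comp e.toMonoidHom
  let g : Q →* Aff1 p := (linearOfMulAut.comp (MulAut.congr e).toMonoidHom).comp
    ((MulAut.conjNormal (H := P)).comp Q.subtype)
  have hfeval : Function.Injective (fun x ↦ f x 0) := by
    intro x y hxy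
    simpa [f] using hxy
  have hf : Function.Injective f := hfeval.of_comp (f := fun h : Aff1 p ↦ h 0)
  have hg : Function.Injective g :=
    (linearOfMulAut_injective.comp (MulAut.congr e).injective).comp
      (conjNormal_comp_subtype_injective hQ.disjoint hC)
  have hfg : Disjoint f.range g.range := by
    rw [Subgroup.disjoint_def]
    rintro _ ⟨x, rfl⟩ ⟨q, hq⟩
    have hx : f x 0 = f 1 0 := by
      rw [← hq, map_one]
      exact map_zero (MulAut.congr e _).toAdditive
    rw [hfeval hx, map_one]
  refine exists_injective_of_isComplement' hQ hf hg hfg fun q x ↦ ?_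
  simpa [f, g] using
    linearOfMulAut_mul_constVAddHom (MulAut.congr e (MulAut.conjNormal (q : G))) (e x)

end Affine

section Wreath

variable {G : Type*} [Group G] {p : ℕ}

theorem card_wreathCpC2 : Nat.card (WreathCpC2 p) = 2 * p ^ 2 := by
  have hzmod (n : ℕ) : Nat.card (Multiplicative (ZMod n)) = n := Nat.card_zmod n
  rw [SemidirectProduct.card, Nat.card_prod, hzmod, hzmod, sq, mul_comm]

theorem exists_injective_zmod_orderOf (τ : G) :
    ∃ g : Multiplicative (ZMod (orderOf τ)) →* G,
      Function.Injective g ∧ g (Multiplicative.ofAdd 1) = τ := by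
  let f : ℤ →+ Additive G := zmultiplesHom (Additive G) (Additive.ofMul τ)
  have hf : ∀ m, f m = Additive.ofMul (τ ^ m) := fun m ↦ rfl
  have hforder : f (orderOf τ) = 0 := by rw [hf, zpow_natCast, pow_orderOf_eq_one, ofMul_one]
  have hinj : Function.Injective (ZMod.lift (orderOf τ) ⟨f, hforder⟩) :=
    (ZMod.lift_injective _).2 fun m hm ↦
      (ZMod.intCast_zmod_eq_zero_iff_dvd m _).2 (orderOf_dvd_iff_zpow_eq_one.2 hm)
  refine ⟨AddMonoidHom.toMultiplicativeLeft (ZMod.lift _ ⟨f, hforder⟩), hinj, ?_⟩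
  have h1 : ZMod.lift (orderOf τ) ⟨f, hforder⟩ 1 = Additive.ofMul τ := by
    simpa [hf] using ZMod.lift_coe (orderOf τ) ⟨f, hforder⟩ 1
  exact h1

theorem noncommCoprod_comp_wreathAction {f₁ f₂ : Multiplicative (ZMod p) →* G}
    (hcomm : ∀ x y, Commute (f₁ x) (f₂ y)) {g : Multiplicative (ZMod 2) →* G} {τ : G}
    (hg : g (Multiplicative.ofAdd 1) = τ) (h₁₂ : ∀ x, τ * f₁ x * τ⁻¹ = f₂ x)
    (h₂₁ : ∀ x, τ * f₂ x * τ⁻¹ = f₁ x) (c : Multiplicative (ZMod 2)) :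
    (f₁.noncommCoprod f₂ hcomm).comp (wreathAction p c).toMonoidHom =
      (MulAut.conj (g c)).toMonoidHom.comp (f₁.noncommCoprod f₂ hcomm) := by
  obtain rfl | rfl : c = 1 ∨ c = Multiplicative.ofAdd 1 := by
    revert c; decide
  · rw [map_one, map_one, map_one]
    rfl
  · refine MonoidHom.ext fun x ↦ ?_
    calc f₁ x.2 * f₂ x.1 = f₂ x.1 * f₁ x.2 := hcomm _ _
      _ = MulAut.conj τ (f₁ x.1) * MulAut.conj τ (f₂ x.2) :=
        (congrArg₂ (· * ·) (h₁₂ x.1) (h₂₁ x.2)).symm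
      _ = MulAut.conj τ (f₁ x.1 * f₂ x.2) := (map_mul _ _ _).symm
      _ = MulAut.conj (g (Multiplicative.ofAdd 1)) (f₁ x.1 * f₂ x.2) := by rw [hg]

theorem exists_injective_wreathCpC2 [Fact p.Prime] (hodd : Odd p) {H : Subgroup G}
    (hH : Nat.card H = p) {τ : G} (hτ : orderOf τ = 2)
    (hcomm : ∀ x ∈ H, ∀ y ∈ H, Commute x (τ * y * τ⁻¹))
    (hdisj : Disjoint H (H.map (MulAut.conj τ).toMonoidHom)) :
    ∃ F : WreathCpC2 p →* G, Function.Injective F := by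
  let e : Multiplicative (ZMod p) ≃* H := mulEquivOfPrimeCardEq (Nat.card_zmod p) hH
  let f₁ : Multiplicative (ZMod p) →* G := H.subtype.comp e.toMonoidHom
  let f₂ : Multiplicative (ZMod p) →* G := (MulAut.conj τ).toMonoidHom.comp f₁
  have hf₁₂ : ∀ x y, Commute (f₁ x) (f₂ y) := fun x y ↦ hcomm _ (e x).2 _ (e y).2
  have hf₁ : Function.Injective f₁ := Subtype.val_injective.comp e.injective
  have hf₂ : Function.Injective f₂ := (MulAut.conj τ).injective.comp hf₁
  have hf : Function.Injective (f₁.noncommCoprod f₂ hf₁₂) := by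
    refine (MonoidHom.noncommCoprod_injective _ _ _).2 ⟨hf₁, hf₂, hdisj.mono ?_ ?_⟩
    · rintro _ ⟨x, rfl⟩
      exact (e x).2
    · rintro _ ⟨x, rfl⟩
      exact ⟨_, (e x).2, rfl⟩
  obtain ⟨g, hg, hgτ⟩ := hτ ▸ exists_injective_zmod_orderOf τ
  have hττ : τ⁻¹ = τ := inv_eq_of_mul_eq_one_left (by rw [← sq, ← hτ, pow_orderOf_eq_one])
  have hf₂₁ (x : Multiplicative (ZMod p)) : τ * f₂ x * τ⁻¹ = f₁ x :=
    calc τ * (τ * f₁ x * τ⁻¹) * τ⁻¹ = τ⁻¹ * (τ * f₁ x * τ⁻¹) * τ := by rw [hττ]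
      _ = f₁ x := by group
  have hfg : Disjoint (f₁.noncommCoprod f₂ hf₁₂).range g.range := by
    refine Subgroup.disjoint_of_coprime_natCard ?_
    rw [← Nat.card_congr (MonoidHom.ofInjective hf).toEquiv,
      ← Nat.card_congr (MonoidHom.ofInjective hg).toEquiv, Nat.card_prod]
    have hp2 : p.Coprime 2 := Nat.coprime_two_right.2 hodd
    simpa using hp2.mul_left hp2
  exact ⟨_, semidirectProduct_lift_injective
    (noncommCoprod_comp_wreathAction hf₁₂ hgτ (fun _ ↦ rfl) hf₂₁) hf hg hfg⟩

theorem nonempty_mulEquiv_wreathCpC2 [NeZero p] (hG : Nat.card G = 2 * p ^ 2)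
    (hF : ∃ F : WreathCpC2 p →* G, Function.Injective F) : Nonempty (G ≃* WreathCpC2 p) := by
  obtain ⟨F, hF⟩ := hF
  have hcard : Nat.card G = Nat.card (WreathCpC2 p) := hG.trans card_wreathCpC2.symm
  have : Finite G := Nat.finite_of_card_ne_zero
    (hG.trans_ne (mul_ne_zero two_ne_zero (pow_ne_zero 2 (NeZero.ne p))))
  exact ⟨(MulEquiv.ofBijective F (hF.bijective_of_nat_card_le hcard.le)).symm⟩

end Wreath

section SylowSubgroups

theorem ncard_sdiff_of_ncard_inter_eq {α : Type*} [Finite α] {T A : Set α} {n : ℕ}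
    (hT : T.ncard = 2 * n) (hTA : (T ∩ A).ncard = n) : (T \ A).ncard = n := by
  have := Set.ncard_inter_add_ncard_sdiff_eq_ncard T A
  omega

variable {G : Type*} [Group G] {H P : Subgroup G} {T : Set G} {p : ℕ}

theorem normal_of_le_center (hP : P ≤ Subgroup.center G) : P.Normal :=
  ⟨fun x hx g ↦ by rwa [Subgroup.mem_center_iff.1 (hP hx) g, mul_inv_cancel_right]⟩

theorem le_center_of_subset_centralizer (hgen : Subgroup.closure T = ⊤)
    (hTP : T ⊆ Subgroup.centralizer (P : Set G)) : P ≤ Subgroup.center G := by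
  have htop : Subgroup.centralizer (P : Set G) = ⊤ :=
    top_le_iff.1 (hgen ▸ (Subgroup.closure_le _).2 hTP)
  exact Subgroup.centralizer_eq_top_iff_subset.1 htop

theorem IsRCC.subset_centralizer_or_ncard_inter_eq [hp : Fact p.Prime] [Finite G] (hT : IsRCC T)
    (h1 : 1 ∈ T) (hcard : T.ncard = 2 * p) (hP : IsPGroup p P) :
    T ⊆ Subgroup.centralizer (P : Set G) ∨
      (T ∩ Subgroup.centralizer (P : Set G)).ncard = p := by
  have hmod := ncard_modEq_ncard_inter_centralizer hP fun x _ t ht ↦ hT.conj_mem x ht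
  have hdvd : p ∣ (T ∩ Subgroup.centralizer (P : Set G)).ncard :=
    (hmod.dvd_iff dvd_rfl).1 (hcard ▸ dvd_mul_left p 2)
  have hpos : 0 < (T ∩ Subgroup.centralizer (P : Set G)).ncard :=
    (Set.ncard_pos (Set.toFinite _)).2 ⟨1, h1, one_mem _⟩
  have hle := Set.ncard_le_ncard (Set.inter_subset_left :
    T ∩ Subgroup.centralizer (P : Set G) ⊆ T)
  obtain ⟨k, hk⟩ := hdvd
  have hk2 : k ≤ 2 := by
    rw [hk, hcard, mul_comm 2] at hle
    exact Nat.le_of_mul_le_mul_left hle hp.out.pos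
  interval_cases k
  · omega
  · exact Or.inr (by simpa using hk)
  · refine Or.inl (Set.inter_eq_left.1 (Set.eq_of_subset_of_ncard_le Set.inter_subset_left ?_))
    omega

theorem subgroupOf_normal_of_relIndex_eq_prime [hp : Fact p.Prime] [Finite G]
    (hP : IsPGroup p P) (hHP : H.relIndex P = p) : (H.subgroupOf P).Normal := by
  refine Subgroup.normal_of_index_eq_minFac_card (hHP.trans ?_)
  obtain ⟨n, hn⟩ := hP.exists_card_eq
  have hn0 : n ≠ 0 := by
    rintro rfl
    have := H.relIndex_dvd_card P
    rw [hHP, hn, pow_zero] at this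
    exact hp.out.not_dvd_one this
  rw [hn, hp.out.pow_minFac hn0]

/- The orbit of `r` under the `p`-group `P` has `p` elements, so `C_P(r)` has index `p` in `P` and
is normal. Hence it centralizes the whole orbit of `r`, that is, all of `T \ C_G(P)`. -/
theorem IsRCC.centralizer_inf_le_center [Fact p.Prime] [Finite G] (hT : IsRCC T)
    (hgen : Subgroup.closure T = ⊤) (hP : IsPGroup p P)
    (hcard : (T \ Subgroup.centralizer (P : Set G)).ncard = p) {r : G}
    (hr : r ∈ T \ Subgroup.centralizer (P : Set G)) :
    Subgroup.centralizer {r} ⊓ P ≤ Subgroup.center G ∧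
      (Subgroup.centralizer {r}).relIndex P = p := by
  have horbit := conjOrbit_eq_of_ncard_le hP (fun x _ t ht ↦ hT.conj_mem x ht) hcard.le hr
  have hidx : (Subgroup.centralizer {r}).relIndex P = p := by
    rw [← ncard_conjOrbit, horbit, hcard]
  have hnormal := subgroupOf_normal_of_relIndex_eq_prime hP hidx
  refine ⟨le_center_of_subset_centralizer hgen fun t ht z hz ↦ ?_, hidx⟩
  by_cases htC : t ∈ Subgroup.centralizer (P : Set G)
  · exact htC z hz.2
  · obtain ⟨x, hx, rfl⟩ := horbit.symm.subset ⟨ht, htC⟩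
    have hconj : x⁻¹ * z * x⁻¹⁻¹ ∈ Subgroup.centralizer {r} :=
      hnormal.conj_mem ⟨z, hz.2⟩ hz.1 ⟨x⁻¹, P.inv_mem hx⟩
    have hcomm : Commute (MulAut.conj x (x⁻¹ * z * x⁻¹⁻¹)) (MulAut.conj x r) :=
      Commute.map (Subgroup.mem_centralizer_singleton_iff.1 hconj) (MulAut.conj x)
    simpa [mul_assoc] using hcomm.eq

theorem IsFaithfulFolder.card_dvd_of_le_center [hp : Fact p.Prime] [Finite G]
    (hH : IsFaithfulFolder H) (hodd : Odd p) (hidx : H.index = 2 * p) (hP : IsPGroup p P)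
    (hcenter : P ≤ Subgroup.center G) : Nat.card P ∣ p := by
  have := normal_of_le_center hcenter
  have hdvd : Nat.card P ∣ 2 * p := hidx ▸ Dvd.intro_left _
    (index_sup_mul_card (hH.disjoint_center.mono_left hcenter).symm)
  obtain ⟨n, hn⟩ := hP.exists_card_eq
  rw [hn] at hdvd ⊢
  exact (hodd.coprime_two_right.pow_left n).dvd_of_dvd_mul_left hdvd

theorem IsFaithfulFolder.card_sylow_eq_or_exists_le_center [hp : Fact p.Prime] [Finite G]
    (hH : IsFaithfulFolder H) (hodd : Odd p) (hidx : H.index = 2 * p) (h1 : 1 ∈ T)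
    (hT : IsRCC T) (hcard : T.ncard = 2 * p) (hgen : Subgroup.closure T = ⊤) (P : Sylow p G) :
    Nat.card P = p ∨
      Nat.card P = p ^ 2 ∧ ∃ Z ≤ Subgroup.center G, Nat.card Z = p := by
  have hpP : p ∣ Nat.card P :=
    P.dvd_card_of_dvd_card (((dvd_mul_left p 2).trans hidx.symm.dvd).trans H.index_dvd_card)
  obtain hsub | hinter := hT.subset_centralizer_or_ncard_inter_eq h1 hcard P.isPGroup'
  · have hcenter := le_center_of_subset_centralizer hgen hsub
    exact Or.inl ((hH.card_dvd_of_le_center hodd hidx P.isPGroup' hcenter).antisymm hpP)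
  have hdiff := ncard_sdiff_of_ncard_inter_eq hcard hinter
  obtain ⟨r, hr⟩ := Set.nonempty_of_ncard_ne_zero (hdiff.trans_ne hp.out.ne_zero)
  obtain ⟨hcenter, hrel⟩ := hT.centralizer_inf_le_center hgen P.isPGroup' hdiff hr
  have hmul : Nat.card (Subgroup.centralizer {r} ⊓ P : Subgroup G) * p = Nat.card P := by
    have := card_mul_relIndex (inf_le_right : Subgroup.centralizer {r} ⊓ (P : Subgroup G) ≤ P)
    rwa [Subgroup.inf_relIndex_right, hrel] at this
  have hdvd := hH.card_dvd_of_le_center hodd hidx (P.isPGroup'.to_le inf_le_right) hcenter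
  obtain hZ | hZ := (Nat.dvd_prime hp.out).1 hdvd
  · exact Or.inl (by rw [← hmul, hZ, one_mul])
  · exact Or.inr ⟨by rw [← hmul, hZ, sq], _, hcenter, hZ⟩

end SylowSubgroups

section WreathCase

variable {G : Type*} [Group G] {H K Z : Subgroup G} {p : ℕ}

theorem card_le_relIndex_of_disjoint [Finite G] {L : Subgroup G} (hHL : Disjoint H L)
    (hLK : L ≤ K) : Nat.card L ≤ H.relIndex K := by
  calc Nat.card L = H.relIndex L := by
        rw [← Subgroup.inf_relIndex_right, hHL.eq_bot, Subgroup.relIndex_bot_left]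
    _ ≤ H.relIndex K := Subgroup.relIndex_le_of_le_right hLK Subgroup.index_ne_zero_of_finite

theorem IsFaithfulFolder.disjoint_map_conj (hH : IsFaithfulFolder H) (hK : K.index = 2)
    (hKH : K ≤ Subgroup.normalizer (H : Set G)) {g : G} (hg : g ∉ K) :
    Disjoint H (H.map (MulAut.conj g).toMonoidHom) := by
  refine Subgroup.disjoint_def.2 ?_
  rintro _ hxH ⟨x, hx, rfl⟩
  refine hH _ fun y ↦ ?_
  by_cases hy : y ∈ K
  · exact (Subgroup.mem_normalizer_iff.1 (hKH hy) _).1 hxH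
  · have hyg : y * g ∈ K := (Subgroup.mul_mem_iff_of_index_two hK).2 (iff_of_false hy hg)
    simpa [mul_assoc] using (Subgroup.mem_normalizer_iff.1 (hKH hyg) x).1 hx

theorem sup_le_normalizer_of_le_center (hZ : Z ≤ Subgroup.center G) :
    H ⊔ Z ≤ Subgroup.normalizer (H : Set G) :=
  sup_le Subgroup.le_normalizer
    (hZ.trans ((Subgroup.center_le_centralizer _).trans (Subgroup.centralizer_le_normalizer _)))

theorem IsFaithfulFolder.index_sup_eq_two_of_le_center [Finite G] (hH : IsFaithfulFolder H)
    (hidx : H.index = 2 * Nat.card Z) (hZ : Z ≤ Subgroup.center G) : (H ⊔ Z).index = 2 :=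
  have := normal_of_le_center hZ
  index_sup_eq_two (hH.disjoint_center.mono_left hZ).symm hidx

theorem exists_notMem_of_index_eq_two (hK : K.index = 2) : ∃ g, g ∉ K := by
  by_contra! h
  rw [(Subgroup.eq_top_iff' K).2 h, Subgroup.index_top] at hK
  exact OfNat.one_ne_ofNat 2 hK

theorem IsFaithfulFolder.card_eq_of_le_center [hp : Fact p.Prime] [Finite G]
    (hH : IsFaithfulFolder H) (hidx : H.index = 2 * p) (hG : p ^ 2 ∣ Nat.card G) (hodd : Odd p)
    (hZ : Z ≤ Subgroup.center G) (hZp : Nat.card Z = p) : Nat.card H = p := by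
  have hK := hH.index_sup_eq_two_of_le_center (by rw [hidx, hZp]) hZ
  obtain ⟨g, hg⟩ := exists_notMem_of_index_eq_two hK
  have := normal_of_le_center hZ
  have := Subgroup.normal_of_index_eq_two hK
  have hmap : H.map (MulAut.conj g).toMonoidHom ≤ H ⊔ Z := by
    rintro _ ⟨x, hx, rfl⟩
    exact this.conj_mem x (le_sup_left (a := H) hx) g
  have hle : Nat.card H ≤ p := calc
    Nat.card H = Nat.card (H.map (MulAut.conj g).toMonoidHom) :=
      (Subgroup.card_map_of_injective (MulAut.conj g).injective).symm
    _ ≤ H.relIndex (H ⊔ Z) := card_le_relIndex_of_disjoint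
      (hH.disjoint_map_conj hK (sup_le_normalizer_of_le_center hZ) hg) hmap
    _ = Nat.card Z := relIndex_sup_of_disjoint (hH.disjoint_center.mono_left hZ).symm
    _ = p := hZp
  have hdvd : p ∣ Nat.card H := by
    rw [← H.card_mul_index, hidx, ← mul_assoc, sq] at hG
    exact hodd.coprime_two_right.dvd_of_dvd_mul_right (Nat.dvd_of_mul_dvd_mul_right hp.out.pos hG)
  exact hle.antisymm (Nat.le_of_dvd Nat.card_pos hdvd)

/- `H ⊔ Z` has order `p ^ 2`, hence is abelian, and an involution `τ` outside it moves `H` to a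
subgroup meeting `H` trivially. So `H` and `τ` generate a copy of the wreath product. -/
theorem IsFaithfulFolder.nonempty_mulEquiv_wreathCpC2_of_le_center [hp : Fact p.Prime] [Finite G]
    (hH : IsFaithfulFolder H) (hidx : H.index = 2 * p) (hG : p ^ 2 ∣ Nat.card G) (hodd : Odd p)
    (hZ : Z ≤ Subgroup.center G) (hZp : Nat.card Z = p) : Nonempty (G ≃* WreathCpC2 p) := by
  have hK := hH.index_sup_eq_two_of_le_center (by rw [hidx, hZp]) hZ
  have hHp := hH.card_eq_of_le_center hidx hG hodd hZ hZp
  have hcardG : Nat.card G = 2 * p ^ 2 := by rw [← H.card_mul_index, hidx, hHp]; ring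
  have hcardK : Nat.card (H ⊔ Z : Subgroup G) = p ^ 2 := by
    rw [← (H ⊔ Z).card_mul_index, hK, mul_comm] at hcardG
    exact Nat.eq_of_mul_eq_mul_left two_pos hcardG
  have := IsPGroup.isMulCommutative_of_card_eq_prime_sq hcardK
  have := Subgroup.normal_of_index_eq_two hK
  obtain ⟨τ, hτ⟩ := exists_prime_orderOf_dvd_card' 2 (hcardG ▸ dvd_mul_right 2 (p ^ 2))
  have hτK : τ ∉ H ⊔ Z := fun h ↦ by
    have h2 : 2 ∣ p ^ 2 := by
      rw [← hcardK, ← hτ]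
      exact Subgroup.orderOf_dvd_natCard _ h
    exact Nat.not_even_iff_odd.2 hodd.pow (even_iff_two_dvd.2 h2)
  refine nonempty_mulEquiv_wreathCpC2 hcardG (exists_injective_wreathCpC2 hodd hHp hτ
    (fun x hx y hy ↦ ?_) (hH.disjoint_map_conj hK (sup_le_normalizer_of_le_center hZ) hτK))
  exact setLike_mul_comm (s := H ⊔ Z) (le_sup_left (a := H) hx)
    (this.conj_mem y (le_sup_left (a := H) hy) τ)

end WreathCase

section SemiregularAction

theorem mem_orbit_of_notMem_orbit {P α : Type*} [Group P] [MulAction P α] [Finite α] {n : ℕ}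
    (hcard : Nat.card α = 2 * n) (horbit : ∀ ω : α, (MulAction.orbit P ω).ncard = n)
    {ω₀ ω ω' : α} (hω : ω ∉ MulAction.orbit P ω₀) (hω' : ω' ∉ MulAction.orbit P ω₀) :
    ω' ∈ MulAction.orbit P ω := by
  have hsub : MulAction.orbit P ω ⊆ (MulAction.orbit P ω₀)ᶜ := fun x hx hx₀ ↦ hω <| by
    rw [← MulAction.orbit_eq_iff.2 hx₀, MulAction.orbit_eq_iff.2 hx]
    exact MulAction.mem_orbit_self ω
  have hcompl := Set.ncard_add_ncard_compl (MulAction.orbit P ω₀)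
  rw [hcard, horbit] at hcompl
  have heq := Set.eq_of_subset_of_ncard_le hsub (by rw [horbit]; omega)
  exact heq ▸ hω'

variable {G : Type*} [Group G] {H P : Subgroup G} {d : G}

theorem ncard_orbit_of_coprime (hcop : (Nat.card P).Coprime (Nat.card H))
    (ω : G ⧸ H) : (MulAction.orbit P ω).ncard = Nat.card P := by
  have hstab : MulAction.stabilizer P ω = ⊥ := by
    refine (Subgroup.eq_bot_iff_forall _).2 fun x hx ↦ ?_
    obtain ⟨g, rfl⟩ := QuotientGroup.mk_surjective ω
    have hxH : MulAut.conj g⁻¹ (x : G) ∈ H := by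
      have : g⁻¹ * ((x : G) * g) ∈ H := QuotientGroup.eq.1 (Eq.symm hx)
      simpa [mul_assoc] using this
    have horder : orderOf (MulAut.conj g⁻¹ (x : G)) = orderOf x := by
      rw [MulEquiv.orderOf_eq, Subgroup.orderOf_coe]
    exact orderOf_eq_one_iff.1 (Nat.eq_one_of_dvd_coprimes hcop (orderOf_dvd_natCard x)
      (horder ▸ Subgroup.orderOf_dvd_natCard H hxH))
  rw [← MulAction.index_stabilizer, hstab, Subgroup.index_bot]

theorem pow_card_smul_eq_of_mem_orbit {α : Type*} [MulAction G α]
    (hd : d ∈ Subgroup.centralizer (P : Set G)) {ω : α} (hω : d • ω ∈ MulAction.orbit P ω) :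
    d ^ Nat.card P • ω = ω := by
  obtain ⟨x, hx⟩ := hω
  have hfix : (x : G)⁻¹ * d ∈ MulAction.stabilizer G ω := by
    rw [MulAction.mem_stabilizer_iff, mul_smul, inv_smul_eq_iff]
    exact hx.symm
  have hcomm : Commute (x : G)⁻¹ d := hd _ (P.inv_mem x.2)
  have hpow := pow_mem hfix (Nat.card P)
  rwa [hcomm.mul_pow, inv_pow, ← P.coe_pow, pow_card_eq_one', P.coe_one, inv_one, one_mul] at hpow

/- `P` has two regular orbits on `G ⧸ H`. An element of `C_G(P) ⊓ H` fixes the trivial coset, hence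
stabilizes both orbits, and it acts on each of them like some element of `P`. -/
theorem IsFaithfulFolder.disjoint_centralizer [Finite G] (hH : IsFaithfulFolder H)
    (hidx : H.index = 2 * Nat.card P) (hcop : (Nat.card P).Coprime (Nat.card H)) :
    Disjoint (Subgroup.centralizer (P : Set G)) H := by
  refine Subgroup.disjoint_def.2 fun {d} hd hdH ↦ ?_
  have hd₁ : d • ((1 : G) : G ⧸ H) = (1 : G) :=
    QuotientGroup.eq.2 (by simpa using hdH)
  have hfix (x : P) : d • x • ((1 : G) : G ⧸ H) = x • ((1 : G) : G ⧸ H) := by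
    change d • (x : G) • ((1 : G) : G ⧸ H) = (x : G) • ((1 : G) : G ⧸ H)
    rw [← mul_smul, ← hd x x.2, mul_smul, hd₁]
  have horbit (ω : G ⧸ H) : d • ω ∈ MulAction.orbit P ω := by
    by_cases hω : ω ∈ MulAction.orbit P ((1 : G) : G ⧸ H)
    · obtain ⟨x, rfl⟩ := hω
      exact (hfix x).symm ▸ MulAction.mem_orbit_self _
    · refine mem_orbit_of_notMem_orbit hidx (ncard_orbit_of_coprime hcop) hω fun ⟨x, hx⟩ ↦ ?_
      exact hω ⟨x, smul_left_cancel d ((hfix x).trans hx)⟩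
  have hpow : d ^ Nat.card P = 1 := hH _ fun g ↦ by
    have := QuotientGroup.eq.1 (pow_card_smul_eq_of_mem_orbit hd (horbit (g⁻¹ : G))).symm
    simpa [mul_assoc] using this
  exact orderOf_eq_one_iff.1 (Nat.eq_one_of_dvd_coprimes hcop (orderOf_dvd_of_pow_eq_one hpow)
    (Subgroup.orderOf_dvd_natCard H hdH))

end SemiregularAction

section NormalSylow

variable {G : Type*} [Group G] {H K P : Subgroup G} {T : Set G} {p : ℕ}

theorem eq_one_of_sq_eq_one_of_mem (hP : Odd (Nat.card P)) {x : G} (hx : x ∈ P)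
    (hx2 : x ^ 2 = 1) : x = 1 :=
  orderOf_eq_one_iff.1 (Nat.eq_one_of_dvd_coprimes hP.coprime_two_right
    (P.orderOf_dvd_natCard hx) (orderOf_dvd_of_pow_eq_one hx2))

theorem le_centralizer_of_card_eq_prime [Fact p.Prime] (hP : Nat.card P = p) :
    P ≤ Subgroup.centralizer (P : Set G) := by
  have := isCyclic_of_prime_card hP
  exact P.le_centralizer

theorem centralizer_inf_sup_le [P.Normal] (hPC : P ≤ Subgroup.centralizer (P : Set G))
    (hCH : Disjoint (Subgroup.centralizer (P : Set G)) H) :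
    Subgroup.centralizer (P : Set G) ⊓ (H ⊔ P) ≤ P := by
  rintro c ⟨hcC, hcK⟩
  obtain ⟨h, hh, x, hx, rfl⟩ := Subgroup.mem_sup_of_normal_right.1 hcK
  have hhC : h ∈ Subgroup.centralizer (P : Set G) :=
    (Subgroup.mul_mem_cancel_right _ (hPC hx)).1 hcC
  rwa [Subgroup.disjoint_def.1 hCH hhC hh, one_mul]

theorem eq_of_one_mem_of_dvd_ncard [Finite G] (hP : Nat.card P = p) {A : Set G}
    (hAP : A ⊆ P) (h1 : 1 ∈ A) (hdvd : p ∣ A.ncard) : A = P := by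
  refine Set.eq_of_subset_of_ncard_le hAP ?_
  calc (P : Set G).ncard = p := hP
    _ ≤ A.ncard := Nat.le_of_dvd ((Set.ncard_pos (Set.toFinite _)).2 ⟨1, h1⟩) hdvd

theorem IsLoopFolder.inter_sup_eq [Fact p.Prime] [Finite G] [P.Normal] (hLF : IsLoopFolder H T)
    (hT : IsRCC T) (hP : Nat.card P = p) (hHP : Disjoint H P)
    (hCK : Subgroup.centralizer (P : Set G) ⊓ (H ⊔ P) ≤ P) :
    T ∩ (H ⊔ P : Subgroup G) = P := by
  have hcard : (T ∩ (H ⊔ P : Subgroup G)).ncard = p := by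
    rw [hLF.ncard_inter_eq_relIndex le_sup_left, relIndex_sup_of_disjoint hHP, hP]
  have hmod := ncard_modEq_ncard_inter_centralizer (A := T ∩ (H ⊔ P : Subgroup G))
    (IsPGroup.of_card (hP.trans (pow_one p).symm)) fun x hx t ht ↦
      have hxK : x ∈ H ⊔ P := le_sup_right (a := H) hx
      ⟨hT.conj_mem x ht.1, mul_mem (mul_mem hxK ht.2) (inv_mem hxK)⟩
  have hinter : T ∩ (H ⊔ P : Subgroup G) ∩ Subgroup.centralizer (P : Set G) = P :=
    eq_of_one_mem_of_dvd_ncard hP (fun t ht ↦ hCK ⟨ht.2, ht.1.2⟩)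
      ⟨⟨hLF.1, one_mem _⟩, one_mem _⟩ ((hmod.dvd_iff dvd_rfl).1 hcard.symm.dvd)
  exact (Set.eq_of_subset_of_ncard_le (hinter ▸ Set.inter_subset_left)
    (hcard.trans hP.symm).le).symm

theorem exists_orderOf_eq_two_of_notMem (hK : K.index = 2) (hP : Odd (Nat.card P))
    (hPK : P ≤ K) (hCK : Subgroup.centralizer (P : Set G) ⊓ K ≤ P) {c : G}
    (hc : c ∈ Subgroup.centralizer (P : Set G)) (hcK : c ∉ K) :
    ∃ a ∈ Subgroup.centralizer (P : Set G), a ∉ K ∧ orderOf a = 2 := by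
  have hc2 : c ^ 2 ∈ P := hCK ⟨pow_mem hc 2, Subgroup.sq_mem_of_index_two hK c⟩
  have haK : c ^ Nat.card P ∉ K := by
    obtain ⟨k, hk⟩ := hP
    rw [hk, pow_succ, pow_mul]
    exact fun h ↦ hcK ((Subgroup.mul_mem_cancel_left K (pow_mem (hPK hc2) k)).1 h)
  refine ⟨_, pow_mem hc _, haK, orderOf_eq_prime ?_ fun h ↦ haK (h ▸ one_mem K)⟩
  rw [pow_right_comm]
  exact congrArg Subtype.val (pow_card_eq_one' (x := (⟨c ^ 2, hc2⟩ : P)))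

/- A conjugate of `a` is again an involution of `C_G(P)` outside `K`, so it differs from `a` by an
element of `C_G(P) ⊓ K ≤ P` which commutes with `a` and squares to `1`. -/
theorem mem_center_of_sq_eq_one [P.Normal] (hK : K.index = 2) (hP : Odd (Nat.card P))
    (hCK : Subgroup.centralizer (P : Set G) ⊓ K ≤ P) {a : G}
    (ha : a ∈ Subgroup.centralizer (P : Set G)) (haK : a ∉ K) (ha2 : a ^ 2 = 1) :
    a ∈ Subgroup.center G := by
  have := Subgroup.normal_of_index_eq_two hK
  refine Subgroup.mem_center_iff.2 fun g ↦ ?_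
  have hbC : g * a * g⁻¹ ∈ Subgroup.centralizer (P : Set G) :=
    Subgroup.Normal.conj_mem inferInstance a ha g
  have hbK : g * a * g⁻¹ ∉ K := fun h ↦
    haK (by simpa [mul_assoc] using Subgroup.Normal.conj_mem this _ h g⁻¹)
  have hb2 : (g * a * g⁻¹) ^ 2 = 1 := by rw [conj_pow, ha2, mul_one, mul_inv_cancel]
  have hbaP : g * a * g⁻¹ * a ∈ P :=
    hCK ⟨mul_mem hbC ha, (Subgroup.mul_mem_iff_of_index_two hK).2 (iff_of_false hbK haK)⟩
  have hcomm : Commute (g * a * g⁻¹) a :=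
    mul_right_cancel ((ha _ hbaP).trans (mul_assoc a _ a).symm)
  have hba : g * a * g⁻¹ * a = 1 :=
    eq_one_of_sq_eq_one_of_mem hP hbaP (by rw [hcomm.mul_pow, hb2, ha2, one_mul])
  rw [← mul_inv_eq_iff_eq_mul, eq_inv_of_mul_eq_one_left hba]
  exact inv_eq_of_mul_eq_one_left (by rwa [← sq])

theorem odd_relIndex_of_notMem [P.Normal] (hK : K.index = 2) (hPK : P ≤ K) {t a : G}
    (ht : ∀ q : G ⧸ P, q ∈ Subgroup.zpowers (t : G ⧸ P)) (haK : a ∉ K) (ha2 : a ^ 2 = 1) :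
    Odd (P.relIndex K) := by
  obtain ⟨j, hj⟩ := ht a
  have hjodd : Odd j := by
    by_contra hj'
    obtain ⟨i, rfl⟩ := even_iff_exists_two_mul.1 (Int.not_odd_iff_even.1 hj')
    have haP : (t ^ (2 * i))⁻¹ * a ∈ P := QuotientGroup.eq.1 hj
    have htK : t ^ (2 * i) ∈ K := by
      rw [zpow_mul]
      exact zpow_mem (by exact_mod_cast Subgroup.sq_mem_of_index_two hK t) i
    exact haK ((Subgroup.mul_mem_cancel_left K (inv_mem htK)).1 (hPK haP))
  have horder : orderOf (t : G ⧸ P) = P.relIndex K * 2 := by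
    rw [orderOf_eq_card_of_forall_mem_zpowers ht, ← hK, Subgroup.relIndex_mul_index hPK]
    rfl
  have hdvd : (orderOf (t : G ⧸ P) : ℤ) ∣ j * 2 := by
    refine orderOf_dvd_iff_zpow_eq_one.2 ?_
    have hj' : (t : G ⧸ P) ^ j = a := hj
    rw [zpow_mul, hj']
    exact_mod_cast congrArg ((↑) : G → G ⧸ P) ha2
  rw [horder] at hdvd
  have hdvd' : ((P.relIndex K : ℕ) : ℤ) ∣ j :=
    Int.dvd_of_mul_dvd_mul_right two_ne_zero (by exact_mod_cast hdvd)
  exact hjodd.natAbs.of_dvd_nat (Int.natCast_dvd.1 hdvd')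

/- By the congruence for the conjugation action of `P`, either `T \ K` centralizes `P` or it is a
single orbit of `P`. -/
theorem inv_mul_mem_of_mem_sdiff [hp : Fact p.Prime] [Finite G] [P.Normal] (hK : K.index = 2)
    (hT : IsRCC T) (hP : Nat.card P = p) (hcard : (T \ K).ncard = p)
    (hCK : Subgroup.centralizer (P : Set G) ⊓ K ≤ P) {s t : G} (hs : s ∈ T \ K) (ht : t ∈ T \ K) :
    t⁻¹ * s ∈ P := by
  have := Subgroup.normal_of_index_eq_two hK
  have hconj (x : G) (_ : x ∈ P) (r : G) (hr : r ∈ T \ K) : x * r * x⁻¹ ∈ T \ K :=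
    ⟨hT.conj_mem x hr.1, fun h ↦
      hr.2 (by simpa [mul_assoc] using Subgroup.Normal.conj_mem this _ h x⁻¹)⟩
  have hPp : IsPGroup p P := IsPGroup.of_card (hP.trans (pow_one p).symm)
  by_cases hC : T \ K ⊆ Subgroup.centralizer (P : Set G)
  · exact hCK ⟨Subgroup.mul_mem _ (Subgroup.inv_mem _ (hC ht)) (hC hs),
      (Subgroup.mul_mem_iff_of_index_two hK).2 (iff_of_false (K.inv_mem_iff.not.2 ht.2) hs.2)⟩
  obtain ⟨r, hr, hrC⟩ := Set.not_subset.1 hC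
  have horbit : conjOrbit P r = T \ K := by
    refine Set.eq_of_subset_of_ncard_le (fun _ ⟨x, hx, hxr⟩ ↦ hxr ▸ hconj x hx r hr) ?_
    exact hcard.le.trans (Nat.le_of_dvd ((Set.ncard_pos (Set.toFinite _)).2 ⟨_, 1, one_mem P, rfl⟩)
      (dvd_ncard_conjOrbit hPp hrC))
  obtain ⟨x, hx, rfl⟩ := horbit.symm.subset hs
  obtain ⟨y, hy, rfl⟩ := horbit.symm.subset ht
  have hyx : r⁻¹ * (y⁻¹ * x) * r⁻¹⁻¹ ∈ P :=
    Subgroup.Normal.conj_mem inferInstance _ (mul_mem (inv_mem hy) hx) r⁻¹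
  simpa [mul_assoc] using mul_mem (mul_mem hy hyx) (inv_mem hx)

theorem mem_zpowers_mk_of_closure_eq_top [P.Normal] (hgen : Subgroup.closure T = ⊤) {t : G}
    (hTK : T ∩ K ⊆ P) (ht : ∀ s ∈ T \ K, t⁻¹ * s ∈ P) (q : G ⧸ P) :
    q ∈ Subgroup.zpowers (t : G ⧸ P) := by
  have hle : Subgroup.closure T ≤
      (Subgroup.zpowers (t : G ⧸ P)).comap (QuotientGroup.mk' P) := by
    refine (Subgroup.closure_le _).2 fun s hs ↦ ?_
    by_cases hsK : s ∈ K
    · have hs1 : (s : G ⧸ P) = 1 := (QuotientGroup.eq_one_iff s).2 (hTK ⟨hs, hsK⟩)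
      change (s : G ⧸ P) ∈ Subgroup.zpowers (t : G ⧸ P)
      exact hs1 ▸ one_mem _
    · have hst : (t : G ⧸ P) = s := QuotientGroup.eq.2 (ht s ⟨hs, hsK⟩)
      change (s : G ⧸ P) ∈ Subgroup.zpowers (t : G ⧸ P)
      exact hst ▸ Subgroup.mem_zpowers _
  obtain ⟨g, rfl⟩ := QuotientGroup.mk_surjective q
  exact hle (hgen ▸ Subgroup.mem_top g)

theorem exists_injective_aff1_of_centralizer_inf_le [Fact p.Prime] [P.Normal]
    (hP : Nat.card P = p) (hPK : P ≤ K) (hcop : p.Coprime (P.relIndex K))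
    (hCK : Subgroup.centralizer (P : Set G) ⊓ K ≤ P) :
    ∃ f : K →* Aff1 p, Function.Injective f := by
  have hcard : Nat.card (P.subgroupOf K) = p :=
    (Nat.card_congr (Subgroup.subgroupOfEquivOfLe hPK).toEquiv).trans hP
  refine exists_injective_aff1 hcard hcop fun k hk ↦ hCK ⟨fun x hx ↦ ?_, k.2⟩
  exact congrArg Subtype.val (hk ⟨x, hPK hx⟩ hx)

/-- Case (c) of the classification: `G` is the internal direct product of `K` and a subgroup of
order `2`, where `K` has odd order and embeds into `Aff(1, p)`. -/
def IsAffineDirectFactor (p : ℕ) (K : Subgroup G) : Prop :=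
  ∃ a : G, orderOf a = 2 ∧ K.Normal ∧ (Subgroup.zpowers a).Normal ∧
    K ⊓ Subgroup.zpowers a = ⊥ ∧ K ⊔ Subgroup.zpowers a = ⊤ ∧
    Odd (Nat.card K) ∧ ∃ f : K →* Aff1 p, Function.Injective f

theorem isAffineDirectFactor_of_mem_center [Finite G] (hK : K.index = 2)
    (hKodd : Odd (Nat.card K)) {a : G} (ha : a ∈ Subgroup.center G)
    (ha2 : orderOf a = 2) (hf : ∃ f : K →* Aff1 p, Function.Injective f) :
    IsAffineDirectFactor p K := by
  have hdisj : Disjoint K (Subgroup.zpowers a) := by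
    refine Subgroup.disjoint_of_coprime_natCard ?_
    rw [Nat.card_zpowers, ha2]
    exact hKodd.coprime_two_right
  have hnormal := normal_of_le_center (Subgroup.zpowers_le.2 ha)
  have hsup : (K ⊔ Subgroup.zpowers a).index = 1 := by
    have := index_sup_mul_card hdisj
    rw [hK, Nat.card_zpowers, ha2] at this
    omega
  exact ⟨a, ha2, Subgroup.normal_of_index_eq_two hK, hnormal, hdisj.eq_bot,
    Subgroup.index_eq_one.1 hsup, hKodd, hf⟩

theorem IsRCC.injective_aff1_or_isAffineDirectFactor [hp : Fact p.Prime] [Finite G]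
    [P.Normal] (hT : IsRCC T) (hgen : Subgroup.closure T = ⊤)
    (hodd : Odd p) (hP : Nat.card P = p) (hcop : p.Coprime P.index)
    (hK : (H ⊔ P).index = 2) (hTK : T ∩ (H ⊔ P : Subgroup G) = P) (hcard : T.ncard = 2 * p)
    (hCK : Subgroup.centralizer (P : Set G) ⊓ (H ⊔ P) ≤ P) :
    (∃ f : G →* Aff1 p, Function.Injective f) ∨ IsAffineDirectFactor p (H ⊔ P) := by
  by_cases hC : Subgroup.centralizer (P : Set G) ≤ P
  · exact Or.inl (exists_injective_aff1 hP hcop hC)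
  right
  obtain ⟨c, hc, hcP⟩ := SetLike.not_le_iff_exists.1 hC
  obtain ⟨a, haC, haK, ha⟩ := exists_orderOf_eq_two_of_notMem hK (hP ▸ hodd) le_sup_right hCK hc
    fun hcK ↦ hcP (hCK ⟨hc, hcK⟩)
  have ha2 : a ^ 2 = 1 := ha ▸ pow_orderOf_eq_one a
  have hdiff : (T \ (H ⊔ P : Subgroup G)).ncard = p :=
    ncard_sdiff_of_ncard_inter_eq hcard (by rw [hTK]; exact hP)
  obtain ⟨t, ht⟩ := Set.nonempty_of_ncard_ne_zero (hdiff.trans_ne hp.out.ne_zero)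
  have hcyclic := mem_zpowers_mk_of_closure_eq_top hgen hTK.le fun s hs ↦
    inv_mul_mem_of_mem_sdiff hK hT hP hdiff hCK hs ht
  have hKodd : Odd (Nat.card (H ⊔ P : Subgroup G)) := by
    rw [← card_mul_relIndex le_sup_right, hP]
    exact hodd.mul (odd_relIndex_of_notMem hK le_sup_right hcyclic haK ha2)
  refine isAffineDirectFactor_of_mem_center hK hKodd
    (mem_center_of_sq_eq_one hK (hP ▸ hodd) hCK haC haK ha2) ha ?_
  exact exists_injective_aff1_of_centralizer_inf_le hP le_sup_right
    (hcop.coprime_dvd_right (P.relIndex_dvd_index_of_normal _)) hCK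

end NormalSylow

section SylowNormality

variable {G : Type*} [Group G] {H K P : Subgroup G} {T : Set G} {p : ℕ}

theorem inv_mul_mem_of_relIndex_le_two [Finite G] (hPK : P.relIndex K ≤ 2) {x y : G} (hx : x ∈ K)
    (hy : y ∈ K) (hxy : x ∈ P ↔ y ∈ P) : x⁻¹ * y ∈ P := by
  obtain h | h : P.relIndex K = 1 ∨ P.relIndex K = 2 := by
    have : P.relIndex K ≠ 0 := Subgroup.index_ne_zero_of_finite
    omega
  · exact Subgroup.relIndex_eq_one.1 h (mul_mem (inv_mem hx) hy)
  · exact (Subgroup.mul_mem_iff_of_index_two (a := (⟨x, hx⟩ : K)⁻¹) (b := ⟨y, hy⟩) h).2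
      (Subgroup.inv_mem_iff _ |>.trans hxy)

theorem commute_of_relIndex_centralizer_le_two [Finite G]
    (hPC : P.relIndex (Subgroup.centralizer (P : Set G)) ≤ 2) {x y : G}
    (hx : x ∈ Subgroup.centralizer (P : Set G)) (hy : y ∈ Subgroup.centralizer (P : Set G)) :
    Commute x y := by
  by_cases hxP : x ∈ P
  · exact hy x hxP
  by_cases hyP : y ∈ P
  · exact (hx y hyP).symm
  have h : x⁻¹ * y * x = x * (x⁻¹ * y) :=
    hx _ (inv_mul_mem_of_relIndex_le_two hPC hx hy (iff_of_false hxP hyP))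
  rw [mul_inv_cancel_left, mul_assoc, inv_mul_eq_iff_eq_mul] at h
  exact h.symm

theorem sq_mem_of_relIndex_le_two [Finite G] (hPK : P.relIndex K ≤ 2) {x : G} (hx : x ∈ K) :
    x ^ 2 ∈ P := by
  simpa [sq] using inv_mul_mem_of_relIndex_le_two hPK (inv_mem hx) hx P.inv_mem_iff

theorem exists_sq_ne_one_of_two_lt_ncard [Finite G] (hP : Odd (Nat.card P))
    (hPC : P.relIndex (Subgroup.centralizer (P : Set G)) ≤ 2) {A : Set G}
    (hA : A ⊆ Subgroup.centralizer (P : Set G)) (hcard : 2 < A.ncard) : ∃ s ∈ A, s ^ 2 ≠ 1 := by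
  have hProp : (Set.univ : Set Prop).ncard = 2 := by simp [Set.ncard_univ]
  obtain ⟨x, hx, y, hy, hne, hxy⟩ :=
    Set.exists_ne_map_eq_of_ncard_lt_of_maps_to (t := Set.univ) (hProp.trans_lt hcard)
      (f := (· ∈ P)) fun _ _ ↦ Set.mem_univ _
  by_contra! hsq
  refine hne (inv_mul_eq_one.1 (eq_one_of_sq_eq_one_of_mem hP
    (inv_mul_mem_of_relIndex_le_two hPC (hA hx) (hA hy) hxy.to_iff) ?_))
  have hcomm := commute_of_relIndex_centralizer_le_two hPC (hA hx) (hA hy)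
  rw [hcomm.inv_left.mul_pow, inv_pow, hsq x hx, hsq y hy, inv_one, one_mul]

theorem zpowers_sq_eq_of_sq_ne_one [Fact p.Prime] [Finite G] (hP : Nat.card P = p)
    (hPC : P.relIndex (Subgroup.centralizer (P : Set G)) ≤ 2) {s : G}
    (hs : s ∈ Subgroup.centralizer (P : Set G)) (hs2 : s ^ 2 ≠ 1) :
    Subgroup.zpowers (s ^ 2) = P := by
  have hsP := sq_mem_of_relIndex_le_two hPC hs
  refine le_antisymm (Subgroup.zpowers_le.2 hsP) fun x hx ↦ ?_
  obtain ⟨k, hk⟩ := mem_zpowers_of_prime_card hP (g := ⟨s ^ 2, hsP⟩) (g' := ⟨x, hx⟩)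
    fun h ↦ hs2 (congrArg Subtype.val h)
  exact ⟨k, congrArg Subtype.val hk⟩

theorem centralizer_singleton_eq_of_sq_ne_one [Fact p.Prime] [Finite G] (hP : Nat.card P = p)
    (hPC : P.relIndex (Subgroup.centralizer (P : Set G)) ≤ 2) {s : G}
    (hs : s ∈ Subgroup.centralizer (P : Set G)) (hs2 : s ^ 2 ≠ 1) :
    Subgroup.centralizer {s} = Subgroup.centralizer (P : Set G) := by
  refine le_antisymm (fun x hx ↦ ?_) fun x hx ↦
    Subgroup.mem_centralizer_singleton_iff.2 (commute_of_relIndex_centralizer_le_two hPC hx hs).eq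
  rw [← zpowers_sq_eq_of_sq_ne_one hP hPC hs hs2]
  rintro _ ⟨k, rfl⟩
  have hcomm : Commute x s := Subgroup.mem_centralizer_singleton_iff.1 hx
  exact ((hcomm.pow_right 2).zpow_right k).eq.symm

theorem mem_normalizer_of_conj_mem_centralizer [Fact p.Prime] [Finite G] (hP : Nat.card P = p)
    (hPC : P.relIndex (Subgroup.centralizer (P : Set G)) ≤ 2) {s g : G}
    (hs : s ∈ Subgroup.centralizer (P : Set G)) (hs2 : s ^ 2 ≠ 1)
    (hg : g * s * g⁻¹ ∈ Subgroup.centralizer (P : Set G)) :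
    g ∈ Subgroup.normalizer (P : Set G) := by
  rw [Subgroup.mem_normalizer_iff_map_conj_eq]
  have hgs2 : (g * s * g⁻¹) ^ 2 ≠ 1 := by rwa [conj_pow, Ne, conj_eq_one_iff]
  calc P.map (MulAut.conj g).toMonoidHom
      = (Subgroup.zpowers (s ^ 2)).map (MulAut.conj g).toMonoidHom := by
        rw [zpowers_sq_eq_of_sq_ne_one hP hPC hs hs2]
    _ = Subgroup.zpowers ((g * s * g⁻¹) ^ 2) := by
        rw [MonoidHom.map_zpowers, conj_pow]
        rfl
    _ = P := zpowers_sq_eq_of_sq_ne_one hP hPC hg hgs2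

theorem IsRCC.sdiff_centralizer_subset_conjOrbit [Fact p.Prime] [Finite G] (hT : IsRCC T)
    (hP : Nat.card P = p) (hPC : P.relIndex (Subgroup.centralizer (P : Set G)) ≤ 2)
    (hcard : (T \ Subgroup.centralizer (P : Set G)).ncard = p) {g s : G}
    (hg : g ∉ Subgroup.normalizer (P : Set G)) (hs : s ∈ T ∩ Subgroup.centralizer (P : Set G))
    (hs2 : s ^ 2 ≠ 1) : T \ Subgroup.centralizer (P : Set G) ⊆ conjOrbit ⊤ s := by
  have hgs : g * s * g⁻¹ ∈ T \ Subgroup.centralizer (P : Set G) := ⟨hT.conj_mem g hs.1,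
    fun h ↦ hg (mem_normalizer_of_conj_mem_centralizer hP hPC hs.2 hs2 h)⟩
  rw [← conjOrbit_eq_of_ncard_le (IsPGroup.of_card (hP.trans (pow_one p).symm))
    (fun x _ t ht ↦ hT.conj_mem x ht) hcard.le hgs]
  rintro _ ⟨x, -, rfl⟩
  exact ⟨x * g, Subgroup.mem_top _, by simp [mul_assoc]⟩

theorem IsRCC.conjOrbit_normalizer_subset (hT : IsRCC T) {s : G}
    (hs : s ∈ T ∩ Subgroup.centralizer (P : Set G)) (hs1 : s ≠ 1) :
    conjOrbit (Subgroup.normalizer (P : Set G)) s ⊆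
      (T ∩ Subgroup.centralizer (P : Set G)) \ {1} := by
  rintro _ ⟨x, hx, rfl⟩
  have hxC := (Subgroup.normal_subgroupOf_iff (Subgroup.centralizer_le_normalizer _)).1
    inferInstance s x hs.2 hx
  exact ⟨⟨hT.conj_mem x hs.1, hxC⟩, mt conj_eq_one_iff.1 hs1⟩

theorem IsRCC.conjOrbit_top_eq_union [Fact p.Prime] [Finite G] (hT : IsRCC T)
    (hP : Nat.card P = p) (hPC : P.relIndex (Subgroup.centralizer (P : Set G)) ≤ 2)
    (hcard : (T \ Subgroup.centralizer (P : Set G)).ncard = p) {g s : G}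
    (hg : g ∉ Subgroup.normalizer (P : Set G)) (hs : s ∈ T ∩ Subgroup.centralizer (P : Set G))
    (hs2 : s ^ 2 ≠ 1) :
    conjOrbit ⊤ s = conjOrbit (Subgroup.normalizer (P : Set G)) s ∪
      T \ Subgroup.centralizer (P : Set G) := by
  refine Set.Subset.antisymm ?_ (Set.union_subset ?_
    (hT.sdiff_centralizer_subset_conjOrbit hP hPC hcard hg hs hs2))
  · rintro _ ⟨x, -, rfl⟩
    by_cases hx : x * s * x⁻¹ ∈ Subgroup.centralizer (P : Set G)
    · exact Or.inl ⟨x, mem_normalizer_of_conj_mem_centralizer hP hPC hs.2 hs2 hx, rfl⟩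
    · exact Or.inr ⟨hT.conj_mem x hs.1, hx⟩
  · rintro _ ⟨x, -, rfl⟩
    exact ⟨x, Subgroup.mem_top x, rfl⟩

/- By `IsRCC.conjOrbit_top_eq_union`, `[G : C_G(P)] = [N_G(P) : C_G(P)] + p`. Hence
`[N_G(P) : C_G(P)]` divides `p`, while it is less than `p` because the orbit of `s` under `N_G(P)`
avoids `1 ∈ T ∩ C_G(P)`. -/
theorem IsRCC.normalizer_le_centralizer [hp : Fact p.Prime] [Finite G] (hT : IsRCC T)
    (h1 : 1 ∈ T) (hP : Nat.card P = p)
    (hPC : P.relIndex (Subgroup.centralizer (P : Set G)) ≤ 2)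
    (hinter : (T ∩ Subgroup.centralizer (P : Set G)).ncard = p)
    (hdiff : (T \ Subgroup.centralizer (P : Set G)).ncard = p) {g s : G}
    (hg : g ∉ Subgroup.normalizer (P : Set G)) (hs : s ∈ T ∩ Subgroup.centralizer (P : Set G))
    (hs2 : s ^ 2 ≠ 1) :
    Subgroup.normalizer (P : Set G) ≤ Subgroup.centralizer (P : Set G) := by
  set C := Subgroup.centralizer (P : Set G)
  set N := Subgroup.normalizer (P : Set G)
  have horbit (L : Subgroup G) : (conjOrbit L s).ncard = C.relIndex L := by
    rw [ncard_conjOrbit, centralizer_singleton_eq_of_sq_ne_one hP hPC hs.2 hs2]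
  have hN : conjOrbit N s ⊆ (T ∩ C) \ {1} :=
    hT.conjOrbit_normalizer_subset hs fun h ↦ hs2 (by rw [h, one_pow])
  have hdisj : Disjoint (conjOrbit N s) (T \ C) :=
    Set.disjoint_left.2 fun x hx hx' ↦ hx'.2 (hN hx).1.2
  have hlt : C.relIndex N < p := by
    rw [← horbit, ← hinter]
    exact (Set.ncard_le_ncard hN).trans_lt
      (Set.ncard_sdiff_singleton_lt_of_mem ⟨h1, one_mem C⟩)
  have hindex : C.index = C.relIndex N + p := by
    rw [← Subgroup.relIndex_top_right, ← horbit,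
      hT.conjOrbit_top_eq_union hP hPC hdiff hg hs hs2, Set.ncard_union_eq hdisj, horbit, hdiff]
  have hdvd : C.relIndex N ∣ p := by
    rw [← Nat.dvd_add_right dvd_rfl, ← hindex]
    exact Dvd.intro _ (Subgroup.relIndex_mul_index (Subgroup.centralizer_le_normalizer _))
  exact Subgroup.relIndex_eq_one.1
    (((Nat.dvd_prime hp.out).1 hdvd).resolve_right hlt.ne)

theorem IsLoopFolder.range_subset_pair {Q : Type*} [Group Q] [IsMulCommutative Q]
    (hLF : IsLoopFolder H T) (hQ : Odd (Nat.card Q)) {φ : G →* Q} (hφ : H ≤ φ.ker) {s : G}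
    (hT : ∀ t ∈ T, t ^ 2 = 1 ∨ t ∈ conjOrbit ⊤ s) : Set.range φ ⊆ {1, φ s} := by
  rintro _ ⟨g, rfl⟩
  obtain ⟨t, ht, -⟩ := Subgroup.isComplement_iff_existsUnique_mul_inv_mem.1 hLF.isComplement g
  have hgt : φ g = φ t := by simpa [mul_inv_eq_one] using hφ ht
  rw [hgt]
  obtain ht2 | ⟨x, -, hx⟩ := hT t t.2
  · refine Or.inl (orderOf_eq_one_iff.1 (Nat.eq_one_of_dvd_coprimes hQ.coprime_two_right
      (orderOf_dvd_natCard _) (orderOf_dvd_of_pow_eq_one ?_)))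
    rw [← map_pow, ht2, map_one]
  · right
    rw [← hx, map_mul, map_mul, map_inv, IsMulCommutative.is_comm.comm (φ x), mul_inv_cancel_right]
    rfl

theorem IsRCC.sq_eq_one_or_mem_conjOrbit [Fact p.Prime] [Finite G] (hT : IsRCC T)
    (hP : Nat.card P = p) (hPC : P.relIndex (Subgroup.centralizer (P : Set G)) ≤ 2)
    (hdiff : (T \ Subgroup.centralizer (P : Set G)).ncard = p) {g s : G}
    (hg : g ∉ Subgroup.normalizer (P : Set G)) (hs : s ∈ T ∩ Subgroup.centralizer (P : Set G))
    (hs2 : s ^ 2 ≠ 1) {t : G} (ht : t ∈ T) : t ^ 2 = 1 ∨ t ∈ conjOrbit ⊤ s := by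
  refine or_iff_not_imp_left.2 fun ht2 ↦ ?_
  have hsub := hT.sdiff_centralizer_subset_conjOrbit hP hPC hdiff hg hs hs2
  by_cases htC : t ∈ Subgroup.centralizer (P : Set G)
  · have hgt := hT.sdiff_centralizer_subset_conjOrbit hP hPC hdiff hg ⟨ht, htC⟩ ht2
    obtain ⟨r, hr⟩ := Set.nonempty_of_ncard_ne_zero (hdiff.trans_ne (NeZero.ne p))
    obtain ⟨x, -, hx⟩ := hsub hr
    obtain ⟨y, -, hy⟩ := hgt hr
    refine ⟨y⁻¹ * x, Subgroup.mem_top _, ?_⟩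
    have : y * t * y⁻¹ = x * s * x⁻¹ := hy.trans hx.symm
    calc y⁻¹ * x * s * (y⁻¹ * x)⁻¹ = y⁻¹ * (x * s * x⁻¹) * y := by group
      _ = t := by rw [← this]; group
  · exact hsub ⟨ht, htC⟩

theorem le_ker_of_coprime {Q : Type*} [Group Q] (φ : G →* Q)
    (hcop : (Nat.card Q).Coprime (Nat.card H)) : H ≤ φ.ker := fun h hh ↦
  orderOf_eq_one_iff.1 (Nat.eq_one_of_dvd_coprimes hcop (orderOf_dvd_natCard _)
    ((orderOf_map_dvd φ h).trans (H.orderOf_dvd_natCard hh)))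

theorem surjective_transferSylow [Fact p.Prime] [Finite G] (P : Sylow p G)
    (hNC : Subgroup.normalizer (P : Set G) ≤ Subgroup.centralizer (P : Set G)) :
    Function.Surjective (MonoidHom.transferSylow P hNC) := by
  refine MonoidHom.range_eq_top.1 (Subgroup.eq_top_of_card_eq _ ?_)
  rw [← Subgroup.index_ker]
  exact (MonoidHom.ker_transferSylow_isComplement' P hNC).symm.index_eq_card

theorem IsLoopFolder.normal_of_relIndex_centralizer_le_two [hp : Fact p.Prime] [Finite G]
    (hLF : IsLoopFolder H T) (hT : IsRCC T) (hodd : Odd p) {P : Sylow p G} (hP : Nat.card P = p)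
    (hPC : P.relIndex (Subgroup.centralizer (P : Set G)) ≤ 2) (hcop : p.Coprime (Nat.card H))
    (hcard : T.ncard = 2 * p) (hinter : (T ∩ Subgroup.centralizer (P : Set G)).ncard = p) :
    (P : Subgroup G).Normal := by
  have hp2 : 2 < p := hp.out.two_le.lt_of_ne fun h ↦ Nat.not_odd_iff_even.2 even_two (h ▸ hodd)
  have hdiff := ncard_sdiff_of_ncard_inter_eq hcard hinter
  have hPodd : Odd (Nat.card P) := by rwa [hP]
  have := isCyclic_of_prime_card hP
  rw [← Subgroup.normalizer_eq_top_iff]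
  by_contra hN
  obtain ⟨g, hg⟩ := SetLike.exists_not_mem_of_ne_top _ hN rfl
  obtain ⟨s, hs, hs2⟩ := exists_sq_ne_one_of_two_lt_ncard hPodd hPC Set.inter_subset_right
    (hp2.trans_eq hinter.symm)
  have hNC := hT.normalizer_le_centralizer hLF.1 hP hPC hinter hdiff hg hs hs2
  have hker : H ≤ _ := le_ker_of_coprime (MonoidHom.transferSylow P hNC) (by rwa [hP])
  have hrange := hLF.range_subset_pair hPodd hker fun t ht ↦
    hT.sq_eq_one_or_mem_conjOrbit hP hPC hdiff hg hs hs2 ht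
  rw [(surjective_transferSylow P hNC).range_eq] at hrange
  have hle : p ≤ 2 := by
    calc p = (Set.univ : Set P).ncard := by rw [Set.ncard_univ, hP]
      _ ≤ _ := (Set.ncard_le_ncard hrange)
      _ ≤ 2 := (Set.ncard_insert_le _ _).trans (by rw [Set.ncard_singleton])
  exact hle.not_gt hp2

theorem coprime_card_of_index_eq [hp : Fact p.Prime] [Finite G] (hidx : H.index = 2 * p)
    {P : Sylow p G} (hP : Nat.card P = p) : p.Coprime (Nat.card H) := by
  have hindex : (P : Subgroup G).index = 2 * Nat.card H := by
    refine Nat.eq_of_mul_eq_mul_left hp.out.pos ?_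
    calc p * (P : Subgroup G).index = Nat.card G := by rw [← (P : Subgroup G).card_mul_index, hP]
      _ = p * (2 * Nat.card H) := by rw [← H.card_mul_index, hidx]; ring
  have hcop := P.card_coprime_index
  rw [hP, hindex] at hcop
  exact hcop.coprime_mul_left_right

theorem relIndex_centralizer_le_two [hp : Fact p.Prime] [Finite G]
    (hidx : H.index = 2 * p) (hP : Nat.card P = p)
    (hCH : Disjoint (Subgroup.centralizer (P : Set G)) H) :
    P.relIndex (Subgroup.centralizer (P : Set G)) ≤ 2 := by
  have hle := card_le_relIndex_of_disjoint hCH.symm le_top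
  rw [Subgroup.relIndex_top_right, hidx,
    ← card_mul_relIndex (le_centralizer_of_card_eq_prime hP), hP, mul_comm 2] at hle
  exact Nat.le_of_mul_le_mul_left hle hp.out.pos

theorem IsLoopFolder.sylow_normal [Fact p.Prime] [Finite G]
    (hLF : IsLoopFolder H T) (hT : IsRCC T) (hgen : Subgroup.closure T = ⊤)
    (hcard : T.ncard = 2 * p) (hodd : Odd p) {P : Sylow p G} (hP : Nat.card P = p)
    (hCH : Disjoint (Subgroup.centralizer (P : Set G)) H) : (P : Subgroup G).Normal := by
  have hidx : H.index = 2 * p := hLF.ncard_eq_index.symm.trans hcard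
  obtain hTC | hinter := hT.subset_centralizer_or_ncard_inter_eq hLF.1 hcard P.isPGroup'
  · exact normal_of_le_center (le_center_of_subset_centralizer hgen hTC)
  · exact hLF.normal_of_relIndex_centralizer_le_two hT hodd hP
      (relIndex_centralizer_le_two hidx hP hCH)
      (coprime_card_of_index_eq hidx hP) hcard hinter

end SylowNormality

section Classification

variable {G : Type*} [Group G] {H K : Subgroup G} {T : Set G} {p : ℕ}

theorem card_eq_of_nonempty_mulEquiv_wreathCpC2 (hG : Nonempty (G ≃* WreathCpC2 p)) :
    Nat.card G = 2 * p ^ 2 := by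
  obtain ⟨e⟩ := hG
  rw [Nat.card_congr e.toEquiv, card_wreathCpC2]

theorem not_wreathCpC2_and_injective_aff1 [Fact p.Prime] :
    ¬(Nonempty (G ≃* WreathCpC2 p) ∧ ∃ f : G →* Aff1 p, Function.Injective f) := by
  rintro ⟨hG, f, hf⟩
  have hlt := card_lt_sq_of_injective_aff1 hf
  rw [card_eq_of_nonempty_mulEquiv_wreathCpC2 hG] at hlt
  omega

theorem not_wreathCpC2_and_isAffineDirectFactor [Fact p.Prime] (hK : K.index = 2) :
    ¬(Nonempty (G ≃* WreathCpC2 p) ∧ IsAffineDirectFactor p K) := by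
  rintro ⟨hG, -, -, -, -, -, -, -, f, hf⟩
  have hlt := card_lt_sq_of_injective_aff1 hf
  have hcard := K.card_mul_index
  rw [card_eq_of_nonempty_mulEquiv_wreathCpC2 hG, hK] at hcard
  omega

theorem commute_of_normal_zpowers_of_orderOf_eq_two {a : G} (ha : orderOf a = 2)
    (hnormal : (Subgroup.zpowers a).Normal) (x : G) : Commute x a := by
  obtain ⟨k, hk : a ^ k = x * a * x⁻¹⟩ := hnormal.conj_mem a (Subgroup.mem_zpowers a) x
  rw [← zpow_mod_orderOf, ha, Nat.cast_two] at hk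
  obtain h0 | h1 := Int.emod_two_eq k
  · rw [h0, zpow_zero, eq_comm, conj_eq_one_iff] at hk
    rw [hk]
    exact Commute.one_right x
  · rw [h1, zpow_one] at hk
    exact (eq_mul_inv_iff_mul_eq.1 hk).symm

theorem not_injective_aff1_and_isAffineDirectFactor [hp : Fact p.Prime] [Finite G] (hodd : Odd p)
    (hG : p ∣ Nat.card G) :
    ¬((∃ f : G →* Aff1 p, Function.Injective f) ∧ IsAffineDirectFactor p K) := by
  rintro ⟨⟨f, hf⟩, a, ha, -, hnormal, -⟩
  obtain ⟨x, hx⟩ := exists_prime_orderOf_dvd_card' p hG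
  have hfx : orderOf (f x) = p := (orderOf_injective f hf x).trans hx
  have hfa : orderOf (f a) = 2 := (orderOf_injective f hf a).trans ha
  have hfa1 : f a = 1 := eq_one_of_commute_of_sq_eq_one hodd
    (orderOf_dvd_iff_pow_eq_one.1 hfx.dvd)
    (fun h ↦ hp.out.ne_one (hfx.symm.trans (orderOf_eq_one_iff.2 h)))
    (orderOf_dvd_iff_pow_eq_one.1 hfa.dvd)
    ((commute_of_normal_zpowers_of_orderOf_eq_two ha hnormal x).map f)
  exact OfNat.one_ne_ofNat 2 ((orderOf_eq_one_iff.2 hfa1).symm.trans hfa)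

theorem IsLoopFolder.classification_of_card_eq [Fact p.Prime] [Finite G]
    (hLF : IsLoopFolder H T) (hT : IsRCC T) (hH : IsFaithfulFolder H) (hodd : Odd p)
    (hcard : T.ncard = 2 * p) (hgen : Subgroup.closure T = ⊤) {P : Sylow p G}
    (hP : Nat.card P = p) :
    (H ⊔ P).index = 2 ∧
      ((∃ f : G →* Aff1 p, Function.Injective f) ∨ IsAffineDirectFactor p (H ⊔ P)) ∧
      ∃ N : Subgroup G, N.Normal ∧ Nat.card N = p ∧ T ∩ (H ⊔ P : Subgroup G) = N := by
  have hidx : H.index = 2 * p := hLF.ncard_eq_index.symm.trans hcard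
  have hcop : (Nat.card P).Coprime (Nat.card H) := by
    rw [hP]
    exact coprime_card_of_index_eq hidx hP
  have hCH := hH.disjoint_centralizer (by rw [hidx, hP]) hcop
  have hnormal := hLF.sylow_normal hT hgen hcard hodd hP hCH
  have hPC := le_centralizer_of_card_eq_prime hP
  have hHP : Disjoint H P := (hCH.mono_left hPC).symm
  have hCK := centralizer_inf_sup_le hPC hCH
  have hTK := hLF.inter_sup_eq hT hP hHP hCK
  have hK : (H ⊔ P).index = 2 := index_sup_eq_two hHP (by rw [hidx, hP])
  have hcopP : p.Coprime (P : Subgroup G).index := by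
    simpa only [hP] using P.card_coprime_index
  exact ⟨hK, hT.injective_aff1_or_isAffineDirectFactor hgen hodd hP hcopP hK hTK hcard hCK,
    P, hnormal, hP, hTK⟩

theorem IsLoopFolder.exists_classification [Fact p.Prime] [Finite G]
    (hLF : IsLoopFolder H T) (hT : IsRCC T) (hH : IsFaithfulFolder H) (hodd : Odd p)
    (hcard : T.ncard = 2 * p) (hgen : Subgroup.closure T = ⊤) :
    ∃ K : Subgroup G, H ≤ K ∧ K.index = 2 ∧ (Nonempty (G ≃* WreathCpC2 p) ∨
      ((∃ f : G →* Aff1 p, Function.Injective f) ∨ IsAffineDirectFactor p K) ∧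
        ∃ N : Subgroup G, N.Normal ∧ Nat.card N = p ∧ T ∩ K = N) := by
  have hidx : H.index = 2 * p := hLF.ncard_eq_index.symm.trans hcard
  let P : Sylow p G := default
  obtain hP | ⟨hP, Z, hZ, hZp⟩ :=
    hH.card_sylow_eq_or_exists_le_center hodd hidx hLF.1 hT hcard hgen P
  · obtain ⟨hK, hcase⟩ := hLF.classification_of_card_eq hT hH hodd hcard hgen hP
    exact ⟨H ⊔ P, le_sup_left, hK, Or.inr hcase⟩
  · have hK := hH.index_sup_eq_two_of_le_center (by rw [hidx, hZp]) hZ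
    have hG := hH.nonempty_mulEquiv_wreathCpC2_of_le_center hidx
      (hP ▸ (P : Subgroup G).card_subgroup_dvd_card) hodd hZ hZp
    exact ⟨H ⊔ Z, le_sup_left, hK, Or.inl hG⟩

end Classification

/-- Main theorem: the right multiplication group of an RCC loop of order `2p`, `p` an odd
prime, is `C_p ≀ C_2`, a subgroup of `Aff(1,p)`, or `K × C_2` with `K ≤ Aff(1,p)` of odd
order; the three cases are mutually exclusive, and in cases (b), (c) the subgroup
`⟨T ∩ K⟩` is normal of order `p`. -/
theorem stmt_3 {G : Type*} [Group G] [Finite G] (p : ℕ) (hp : p.Prime) (hodd : Odd p)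
    (H : Subgroup G) (T : Set G)
    (hLF : IsLoopFolder H T) (hRCC : IsRCC T) (hFaith : IsFaithfulFolder H)
    (hord : Nat.card T = 2 * p) (hgen : Subgroup.closure T = ⊤) :
    ∃ K : Subgroup G, H ≤ K ∧ K.index = 2 ∧
      ((Nonempty (G ≃* WreathCpC2 p) ∨
        (∃ f : G →* Aff1 p, Function.Injective f) ∨
        (∃ a : G, orderOf a = 2 ∧ K.Normal ∧ (Subgroup.zpowers a).Normal ∧
          K ⊓ Subgroup.zpowers a = ⊥ ∧ K ⊔ Subgroup.zpowers a = ⊤ ∧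
          Odd (Nat.card K) ∧ ∃ f : K →* Aff1 p, Function.Injective f)) ∧
      ¬(Nonempty (G ≃* WreathCpC2 p) ∧ (∃ f : G →* Aff1 p, Function.Injective f)) ∧
      ¬(Nonempty (G ≃* WreathCpC2 p) ∧
        (∃ a : G, orderOf a = 2 ∧ K.Normal ∧ (Subgroup.zpowers a).Normal ∧
          K ⊓ Subgroup.zpowers a = ⊥ ∧ K ⊔ Subgroup.zpowers a = ⊤ ∧
          Odd (Nat.card K) ∧ ∃ f : K →* Aff1 p, Function.Injective f)) ∧
      ¬((∃ f : G →* Aff1 p, Function.Injective f) ∧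
        (∃ a : G, orderOf a = 2 ∧ K.Normal ∧ (Subgroup.zpowers a).Normal ∧
          K ⊓ Subgroup.zpowers a = ⊥ ∧ K ⊔ Subgroup.zpowers a = ⊤ ∧
          Odd (Nat.card K) ∧ ∃ f : K →* Aff1 p, Function.Injective f)) ∧
      (((∃ f : G →* Aff1 p, Function.Injective f) ∨
        (∃ a : G, orderOf a = 2 ∧ K.Normal ∧ (Subgroup.zpowers a).Normal ∧
          K ⊓ Subgroup.zpowers a = ⊥ ∧ K ⊔ Subgroup.zpowers a = ⊤ ∧
          Odd (Nat.card K) ∧ ∃ f : K →* Aff1 p, Function.Injective f)) →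
        (Subgroup.closure (T ∩ (K : Set G))).Normal ∧
          Nat.card (Subgroup.closure (T ∩ (K : Set G))) = p)) := by
  have : Fact p.Prime := ⟨hp⟩
  obtain ⟨K, hHK, hK, hcase⟩ := hLF.exists_classification hRCC hFaith hodd hord hgen
  have hpG : p ∣ Nat.card G :=
    (Dvd.intro_left 2 (hLF.ncard_eq_index.symm.trans hord).symm).trans H.index_dvd_card
  have hab := not_wreathCpC2_and_injective_aff1 (G := G) (p := p)
  have hac := not_wreathCpC2_and_isAffineDirectFactor (p := p) hK
  refine ⟨K, hHK, hK, hcase.imp_right And.left, hab, hac,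
    not_injective_aff1_and_isAffineDirectFactor hodd hpG, fun hbc ↦ ?_⟩
  obtain hG | ⟨-, N, hN, hNp, hTK⟩ := hcase
  · exact (hbc.elim (fun hb ↦ hab ⟨hG, hb⟩) fun hc ↦ hac ⟨hG, hc⟩).elim
  · rw [hTK, Subgroup.closure_eq]
    exact ⟨hN, hNp⟩
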